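/- For every n ≥ 0 let Σ_I = Σ_O = {a,b} and L_n = { (α(0),β(0))⋯(α(n),β(n)) ∈ (Σ_I × Σ_O)^{n+1} : β(0) = α(n) }. Then (i) there is a constant c such that for every n, L_n = L_*(A_n) for a deterministic acyclic finite automaton A_n with at most c·n states and depth n+1; (ii) Player O wins Γ_f(L_n·(Σ_I × Σ_O)^ω) for some constant delay function f; and (iii) Player I wins Γ_f(L_n·(Σ_I × Σ_O)^ω) for every delay function f with f(0) ≤ n. -/

import Mathlib

/-!
`L_n` consists of the words of length `n + 1` in a regular language that does not depend on `n`,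
namely that of the nonempty words whose first output letter equals their last input letter. The
product of an automaton for this language with a letter counter saturating at `n + 2` has `O(n)`
states. The counter makes it acyclic: it grows strictly until it saturates, and a saturated state
is not productive.

In the game only the letters `α(n)` and `β(0)` matter. If `f(0) > n`, Player O sees `α(n)` before
she picks `β(0)` and can copy it. If `f(0) ≤ n`, then `α(n)` lies in a block that Player I picks
after having seen `β(0)`, so he can choose it different.
-/

namespace DelayGames

/-- A delay function: positive in every round. -/
def IsDelay (f : ℕ → ℕ) : Prop := ∀ i, 1 ≤ f i

/-- A constant delay function: `f i = 1` for all `i > 0`. -/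
def IsConstant (f : ℕ → ℕ) : Prop := ∀ i, 0 < i → f i = 1

section Games

variable {I O : Type*}

/-- `α` is the ω-word obtained by concatenating the blocks `u 0, u 1, u 2, …`:
every finite concatenation of initial blocks is a prefix of `α`. -/
def IsCat (u : ℕ → List I) (α : ℕ → I) : Prop :=
  ∀ i, ((List.range i).map u).flatten =
    (List.range (((List.range i).map u).flatten.length)).map α

/-- The blocks of Player I have the lengths prescribed by the delay function. -/
def ValidBlocks (f : ℕ → ℕ) (u : ℕ → List I) : Prop := ∀ i, (u i).length = f i

/-- The play `(u, v)` is consistent with the strategy `τ` of Player O: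
in every round, `v i` is prescribed by `τ` applied to `u 0 ⋯ u i`. -/
def ConsistentO (τ : List I → O) (u : ℕ → List I) (v : ℕ → O) : Prop :=
  ∀ i, v i = τ (((List.range (i + 1)).map u).flatten)

/-- The play `(u, v)` is consistent with the strategy `τ` of Player I:
in every round, `u i` is prescribed by `τ` applied to `v 0 ⋯ v (i-1)`. -/
def ConsistentI (τ : List O → List I) (u : ℕ → List I) (v : ℕ → O) : Prop :=
  ∀ i, u i = τ ((List.range i).map v)

/-- Player O wins the delay game `Γ_f(L)`: she has a strategy such that every
consistent play (against blocks of the prescribed lengths) has its outcome in `L`. -/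
def WinsO (f : ℕ → ℕ) (L : Set (ℕ → I × O)) : Prop :=
  ∃ τ : List I → O, ∀ u v α, ValidBlocks f u → ConsistentO τ u v → IsCat u α →
    (fun n => (α n, v n)) ∈ L

/-- Player I wins the delay game `Γ_f(L)`: he has a strategy respecting the
lengths prescribed by `f` such that no consistent play has its outcome in `L`. -/
def WinsI (f : ℕ → ℕ) (L : Set (ℕ → I × O)) : Prop :=
  ∃ τ : List O → List I, (∀ w, (τ w).length = f w.length) ∧
    ∀ u v α, ConsistentI τ u v → IsCat u α → (fun n => (α n, v n)) ∉ L

/-- Projection of a winning condition to the first components. -/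
def projL (L : Set (ℕ → I × O)) : Set (ℕ → I) :=
  {α | ∃ β : ℕ → O, (fun n => (α n, β n)) ∈ L}

end Games

/-- The prefix of length `k` of an ω-word. -/
def pre {A : Type*} (x : ℕ → A) (k : ℕ) : List A := (List.range k).map x

/-- `K · A^ω`: the ω-words having a finite prefix in `K`. -/
def extOmega {A : Type*} (K : Set (List A)) : Set (ℕ → A) := {x | ∃ k, pre x k ∈ K}

/-- Nondeterministic automata with a complete transition function. -/
structure NA (Q A : Type*) where
  init : Q
  trans : Q → A → Set Q
  accept : Set Q
  complete : ∀ q a, (trans q a).Nonempty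

namespace NA

variable {Q A : Type*} (M : NA Q A)

/-- The automaton is deterministic. -/
def Deterministic : Prop := ∀ q a, ∃ q', M.trans q a = {q'}

/-- The states reachable from a set of states after reading a finite word. -/
def reach (S : Set Q) (w : List A) : Set Q :=
  w.foldl (fun T a => ⋃ q ∈ T, M.trans q a) S

/-- The finite words accepted by `M` (runs from the initial state ending in `accept`). -/
def Lstar : Set (List A) := {w | (M.reach {M.init} w ∩ M.accept).Nonempty}

/-- `ρ` is a run of `M` on the ω-word `x`. -/
def IsRun (x : ℕ → A) (ρ : ℕ → Q) : Prop :=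
  ρ 0 = M.init ∧ ∀ n, ρ (n + 1) ∈ M.trans (ρ n) (x n)

/-- Reachability acceptance: some run visits an accepting state at least once. -/
def Lexists : Set (ℕ → A) := {x | ∃ ρ, M.IsRun x ρ ∧ ∃ n, ρ n ∈ M.accept}

/-- Safety acceptance: some run visits only accepting states. -/
def Lforall : Set (ℕ → A) := {x | ∃ ρ, M.IsRun x ρ ∧ ∀ n, ρ n ∈ M.accept}

/-- A state is productive if an accepting state is reachable from it. -/
def Productive (q : Q) : Prop := ∃ w, (M.reach {q} w ∩ M.accept).Nonempty

/-- A state lies on a cycle. -/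
def OnCycle (q : Q) : Prop := ∃ w : List A, w ≠ [] ∧ q ∈ M.reach {q} w

/-- An automaton is acyclic if every state on a cycle is non-productive. -/
def Acyclic : Prop := ∀ q, M.OnCycle q → ¬ M.Productive q

/-- A state is reachable from the initial state. -/
def ReachableState (q : Q) : Prop := ∃ w, q ∈ M.reach {M.init} w

/-- `k` is the depth of the (acyclic) automaton `M`: the length of a longest
path from the initial state to an accepting state. -/
def HasDepth (k : ℕ) : Prop :=
  (∀ w ∈ M.Lstar, w.length ≤ k) ∧ ∃ w ∈ M.Lstar, w.length = k

end NA

/-- Projection of an automaton over `I × O` to the alphabet `I`. -/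
def NA.projI {Q I O : Type*} [Nonempty O] (M : NA Q (I × O)) : NA Q I where
  init := M.init
  trans q a := ⋃ b : O, M.trans q (a, b)
  accept := M.accept
  complete q a := by
    obtain ⟨b⟩ := ‹Nonempty O›
    obtain ⟨q', hq'⟩ := M.complete q (a, b)
    exact ⟨q', Set.mem_iUnion.2 ⟨b, hq'⟩⟩

/-- Deterministic parity automata. -/
structure DPA (Q A : Type*) where
  init : Q
  trans : Q → A → Q
  color : Q → ℕ

/-- The maximal value occurring infinitely often in the sequence `c` exists
and is even. -/
def MaxEvenInf (c : ℕ → ℕ) : Prop :=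
  ∃ k, Even k ∧ {n | c n = k}.Infinite ∧ ∀ k', {n | c n = k'}.Infinite → k' ≤ k

/-- Deterministic finite automata (acceptors for finite words). -/
structure DFAcc (S A : Type*) where
  init : S
  trans : S → A → S
  accept : Set S

/-- The language of finite words accepted by a DFA. -/
def DFAcc.lang {S A : Type*} (D : DFAcc S A) : Set (List A) :=
  {w | w.foldl D.trans D.init ∈ D.accept}

namespace DPA

variable {Q A : Type*} (M : DPA Q A)

/-- The unique run of a deterministic automaton on an ω-word. -/
def run (x : ℕ → A) : ℕ → Q
  | 0 => M.init
  | n + 1 => M.trans (run x n) (x n)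

/-- The parity language of `M`: the maximal color visited infinitely often is even. -/
def Lparity : Set (ℕ → A) := {x | MaxEvenInf fun n => M.color (M.run x n)}

/-- The number of colors of `M`. -/
def numColors [Fintype Q] : ℕ := (Finset.image M.color Finset.univ).card

end DPA

namespace DPA

variable {Q I O : Type*} (M : DPA Q (I × O))

/-- The transition function of the color-tracking automaton `𝒞`. -/
def transC (qc : Q × ℕ) (x : I × O) : Q × ℕ :=
  (M.trans qc.1 x, max qc.2 (M.color (M.trans qc.1 x)))

/-- The initial state of the color-tracking automaton `𝒞`. -/
def initC : Q × ℕ := (M.init, M.color M.init)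

/-- The valid states of `𝒞`, i.e. `Q × Ω(Q)`. -/
def QCvalid : Set (Q × ℕ) := {qc | qc.2 ∈ Set.range M.color}

/-- One step of the powerset automaton of the projection of `𝒞`. -/
def transP (S : Set (Q × ℕ)) (a : I) : Set (Q × ℕ) :=
  ⋃ s ∈ S, ⋃ b : O, {M.transC s (a, b)}

/-- Iterated powerset transitions `δ_P^*`. -/
def transPStar (S : Set (Q × ℕ)) (w : List I) : Set (Q × ℕ) :=
  w.foldl M.transP S

/-- The domain of a partial function, represented via `Option`. -/
def rdom {Q : Type*} (r : (Q × ℕ) → Option (Set (Q × ℕ))) : Set (Q × ℕ) :=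
  {qc | r qc ≠ none}

open scoped Classical in
/-- The partial function `r_w^D` with domain `D`. -/
noncomputable def rOf (D : Set (Q × ℕ)) (w : List I) :
    (Q × ℕ) → Option (Set (Q × ℕ)) :=
  fun qc =>
    if qc ∈ D then some (M.transPStar ({(qc.1, M.color qc.1)} : Set (Q × ℕ)) w)
    else none

/-- The set `W_r` of witnesses of a partial function `r`. -/
def WitnessSet (r : (Q × ℕ) → Option (Set (Q × ℕ))) : Set (List I) :=
  {w | r = M.rOf (rdom r) w}

/-- The set `𝔉` of partial functions with nonempty domain and infinitely many
witnesses. -/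
def Frak : Set ((Q × ℕ) → Option (Set (Q × ℕ))) :=
  {r | (rdom r).Nonempty ∧ (M.WitnessSet r).Infinite}

end DPA

end DelayGames

namespace DelayGames

/-- The clopen winning condition `L_n` over `Σ_I = Σ_O = {a, b}` (represented
by `Fin 2`): words `(α(0),β(0))⋯(α(n),β(n))` of length `n + 1` with
`β(0) = α(n)`. -/
def Lclop (n : ℕ) : Set (List (Fin 2 × Fin 2)) :=
  {w | w.length = n + 1 ∧ (w.getD 0 default).2 = (w.getD n default).1}

section Words

variable {A : Type*}

theorem length_pre (x : ℕ → A) (k : ℕ) : (pre x k).length = k := by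
  simp [pre]

theorem getElem?_pre (x : ℕ → A) {i k : ℕ} (hi : i < k) : (pre x k)[i]? = some (x i) := by
  simp [pre, hi]

theorem getD_pre (x : ℕ → A) {i k : ℕ} (hi : i < k) (d : A) : (pre x k).getD i d = x i := by
  rw [List.getD_eq_getElem?_getD, getElem?_pre x hi, Option.getD_some]

theorem mem_extOmega_iff_of_length {K : Set (List A)} {k : ℕ} (hK : ∀ w ∈ K, w.length = k)
    (x : ℕ → A) : x ∈ extOmega K ↔ pre x k ∈ K := by
  refine ⟨fun ⟨j, hj⟩ => ?_, fun h => ⟨k, h⟩⟩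
  rwa [← hK _ hj, length_pre]

end Words

namespace NA

universe v

variable {Q Q' : Type v} {A : Type*}

/-- A deterministic automaton of Mathlib, whose transition function is total and single-valued,
as an automaton in the sense of `NA`. -/
def ofDFA (D : DFA A Q) : NA Q A where
  init := D.start
  trans q a := {D.step q a}
  accept := D.accept
  complete _ _ := Set.singleton_nonempty _

theorem deterministic_ofDFA (D : DFA A Q) : (ofDFA D).Deterministic :=
  fun q a => ⟨D.step q a, rfl⟩

theorem reach_ofDFA (D : DFA A Q) (q : Q) (w : List A) :
    (ofDFA D).reach {q} w = {D.evalFrom q w} := by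
  induction w generalizing q with
  | nil => rfl
  | cons a w ih => simpa [reach, ofDFA] using ih (D.step q a)

theorem mem_lstar_ofDFA (D : DFA A Q) (w : List A) : w ∈ (ofDFA D).Lstar ↔ w ∈ D.accepts := by
  change ((ofDFA D).reach {D.start} w ∩ D.accept).Nonempty ↔ _
  rw [reach_ofDFA, Set.singleton_inter_nonempty, DFA.mem_accepts, DFA.eval]

theorem onCycle_ofDFA (D : DFA A Q) (q : Q) :
    (ofDFA D).OnCycle q ↔ ∃ w, w ≠ [] ∧ D.evalFrom q w = q := by
  simp only [OnCycle, reach_ofDFA, Set.mem_singleton_iff, eq_comm]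

theorem productive_ofDFA (D : DFA A Q) (q : Q) :
    (ofDFA D).Productive q ↔ ∃ w, D.evalFrom q w ∈ D.accept := by
  simp only [Productive, reach_ofDFA, Set.singleton_inter_nonempty]
  rfl

theorem evalFrom_inter (D : DFA A Q) (D' : DFA A Q') (q : Q × Q') (w : List A) :
    (D.inter D').evalFrom q w = (D.evalFrom q.1 w, D'.evalFrom q.2 w) := by
  induction w generalizing q with
  | nil => rfl
  | cons _ _ ih => exact ih _

theorem Acyclic.ofDFA_inter {D : DFA A Q} (hD : (ofDFA D).Acyclic) (D' : DFA A Q') :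
    (ofDFA (D.inter D')).Acyclic := by
  intro q hcycle hprod
  simp only [onCycle_ofDFA, productive_ofDFA, evalFrom_inter] at hcycle hprod
  obtain ⟨w, hw, hq⟩ := hcycle
  obtain ⟨w', hacc⟩ := hprod
  exact hD q.1 ((onCycle_ofDFA D q.1).2 ⟨w, hw, congrArg Prod.fst hq⟩)
    ((productive_ofDFA D q.1).2 ⟨w', hacc.1⟩)

theorem hasDepth_of_length_eq {M : NA Q A} {k : ℕ} (hlen : ∀ w ∈ M.Lstar, w.length = k)
    (hne : M.Lstar.Nonempty) : M.HasDepth k :=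
  ⟨fun _ hw => (hlen _ hw).le, hne.imp fun w hw => ⟨hw, hlen w hw⟩⟩

end NA

section ExactLength

variable {A : Type*}

/-- The automaton accepting the words of length `k`. It counts letters and saturates at `k + 1`. -/
def exactLengthDFA (A : Type*) (k : ℕ) : DFA A (Fin (k + 2)) where
  step i _ := ⟨min (i + 1) (k + 1), by omega⟩
  start := 0
  accept := {i | (i : ℕ) = k}

theorem val_evalFrom_exactLengthDFA (k : ℕ) (i : Fin (k + 2)) (w : List A) :
    ((exactLengthDFA A k).evalFrom i w : ℕ) = min (i + w.length) (k + 1) := by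
  induction w generalizing i with
  | nil =>
    rw [DFA.evalFrom_nil, List.length_nil]
    omega
  | cons a w ih =>
    rw [DFA.evalFrom_cons, ih, List.length_cons]
    dsimp only [exactLengthDFA]
    omega

theorem mem_accepts_exactLengthDFA (k : ℕ) (w : List A) :
    w ∈ (exactLengthDFA A k).accepts ↔ w.length = k := by
  change ((exactLengthDFA A k).evalFrom 0 w : ℕ) = k ↔ _
  rw [val_evalFrom_exactLengthDFA, Fin.val_zero]
  omega

theorem acyclic_exactLengthDFA (A : Type*) (k : ℕ) : (NA.ofDFA (exactLengthDFA A k)).Acyclic := by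
  intro i hcycle hprod
  obtain ⟨w, hw, hi⟩ := (NA.onCycle_ofDFA _ i).1 hcycle
  obtain ⟨w', hacc⟩ := (NA.productive_ofDFA _ i).1 hprod
  have hsaturated : (i : ℕ) = k + 1 := by
    have hval := val_evalFrom_exactLengthDFA k i w
    rw [hi] at hval
    have := List.length_pos_iff.2 hw
    omega
  have hval' := val_evalFrom_exactLengthDFA k i w'
  change ((exactLengthDFA A k).evalFrom i w' : ℕ) = k at hacc
  omega

end ExactLength

section FirstLast

variable {A : Type*}

/-- The automaton accepting the nonempty words whose first and last letters are related by `R`.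
After a nonempty word, its state holds the first and the last letter read. -/
def firstLastDFA (R : A → A → Prop) : DFA A (Option (A × A)) where
  step s a := some ((s.map Prod.fst).getD a, a)
  start := none
  accept := {s | ∃ x y, s = some (x, y) ∧ R x y}

theorem eval_firstLastDFA (R : A → A → Prop) {w : List A} (hw : w ≠ []) :
    (firstLastDFA R).eval w = some (w.head hw, w.getLast hw) := by
  induction w using List.reverseRecOn with
  | nil => exact absurd rfl hw
  | append_singleton w a ih =>
    rw [DFA.eval_append_singleton]
    rcases eq_or_ne w [] with rfl | hne
    · rfl
    · rw [ih hne]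
      simp [firstLastDFA, List.head_append_of_ne_nil hne]

theorem mem_accepts_firstLastDFA (R : A → A → Prop) (w : List A) :
    w ∈ (firstLastDFA R).accepts ↔ ∃ hw : w ≠ [], R (w.head hw) (w.getLast hw) := by
  rw [DFA.mem_accepts]
  rcases eq_or_ne w [] with rfl | hw
  · simp [firstLastDFA]
  · rw [eval_firstLastDFA R hw]
    simp [firstLastDFA, hw]

end FirstLast

/-- The automaton for `L_n`, with `17 (n + 3)` states. -/
def clopDFA (n : ℕ) :
    DFA (Fin 2 × Fin 2) (Fin (n + 3) × Option ((Fin 2 × Fin 2) × (Fin 2 × Fin 2))) :=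
  (exactLengthDFA (Fin 2 × Fin 2) (n + 1)).inter (firstLastDFA fun x y => x.2 = y.1)

theorem lstar_clopDFA (n : ℕ) : (NA.ofDFA (clopDFA n)).Lstar = Lclop n := by
  ext w
  rw [NA.mem_lstar_ofDFA, clopDFA, DFA.accepts_inter, Language.mem_inf,
    mem_accepts_exactLengthDFA, mem_accepts_firstLastDFA]
  refine and_congr_right fun hlen => ?_
  have hw : w ≠ [] := List.ne_nil_of_length_eq_add_one hlen
  have hfirst : w.getD 0 default = w.head hw := by
    rw [List.getD_eq_getElem _ _ (by omega), List.head_eq_getElem]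
  have hlast : w.getD n default = w.getLast hw := by
    rw [List.getD_eq_getElem _ _ (by omega), List.getLast_eq_getElem]
    simp only [hlen, Nat.add_sub_cancel]
  rw [hfirst, hlast, exists_prop_of_true hw]

theorem lclop_nonempty (n : ℕ) : (Lclop n).Nonempty :=
  ⟨List.replicate (n + 1) (0, 0), List.length_replicate, by simp [List.getD_eq_getElem?_getD]⟩

theorem hasDepth_clopDFA (n : ℕ) : (NA.ofDFA (clopDFA n)).HasDepth (n + 1) := by
  apply NA.hasDepth_of_length_eq <;> rw [lstar_clopDFA]
  · exact fun w hw => hw.1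
  · exact lclop_nonempty n

section Blocks

variable {I : Type*} {u : ℕ → List I} {α : ℕ → I}

/-- The concatenation `u 0 ⋯ u (i - 1)` of the first `i` blocks. -/
def catBlocks (u : ℕ → List I) (i : ℕ) : List I := ((List.range i).map u).flatten

theorem catBlocks_succ (u : ℕ → List I) (i : ℕ) : catBlocks u (i + 1) = catBlocks u i ++ u i := by
  simp [catBlocks, List.range_succ]

theorem catBlocks_one (u : ℕ → List I) : catBlocks u 1 = u 0 :=
  catBlocks_succ u 0

theorem le_length_catBlocks (hu : ∀ i, u i ≠ []) (i : ℕ) : i ≤ (catBlocks u i).length := by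
  induction i with
  | zero => exact Nat.zero_le _
  | succ i ih =>
    rw [catBlocks_succ, List.length_append]
    exact Nat.add_le_add ih (List.length_pos_iff.2 (hu i))

theorem IsCat.catBlocks_eq_pre (hα : IsCat u α) (i : ℕ) :
    catBlocks u i = pre α (catBlocks u i).length :=
  hα i

theorem IsCat.mem_block (hα : IsCat u α) {i n : ℕ} (hi : (catBlocks u i).length ≤ n)
    (hn : n < (catBlocks u (i + 1)).length) : α n ∈ u i := by
  have hget : (catBlocks u (i + 1))[n]? = some (α n) := by
    rw [hα.catBlocks_eq_pre, getElem?_pre α hn]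
  rw [catBlocks_succ, List.getElem?_append_right hi] at hget
  exact List.mem_of_getElem? hget

theorem IsCat.exists_mem_block (hα : IsCat u α) (hu : ∀ i, u i ≠ []) {k n : ℕ}
    (hk : (catBlocks u k).length ≤ n) : ∃ i, k ≤ i ∧ α n ∈ u i := by
  by_contra! hnot
  have hshort : ∀ i, k ≤ i → (catBlocks u i).length ≤ n := fun i hi => by
    induction i, hi using Nat.le_induction with
    | base => exact hk
    | succ i hi ih => exact not_lt.1 fun hlt => hnot i hi (hα.mem_block ih hlt)
  have hle := hshort (n + 1 + k) (by omega)
  have hlong := le_length_catBlocks hu (n + 1 + k)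
  omega

end Blocks

/-- The constant delay function `f` with `f 0 = k`. -/
def constantDelay (k : ℕ) : ℕ → ℕ
  | 0 => k
  | _ + 1 => 1

theorem isDelay_constantDelay {k : ℕ} (hk : 1 ≤ k) : IsDelay (constantDelay k)
  | 0 => hk
  | _ + 1 => le_rfl

theorem isConstant_constantDelay (k : ℕ) : IsConstant (constantDelay k)
  | _ + 1, _ => rfl

section Games

variable {I O : Type*} {R : I → O → Prop} {f : ℕ → ℕ} {n : ℕ}

theorem winsO_of_lt [Nonempty I] (hR : ∀ a, ∃ b, R a b) (hn : n < f 0) :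
    WinsO f {γ : ℕ → I × O | R (γ n).1 (γ 0).2} := by
  choose answer h_answer using hR
  obtain ⟨d⟩ := ‹Nonempty I›
  refine ⟨fun w => answer (w.getD n d), fun u v α hu hv hα => ?_⟩
  have hlen : n < (catBlocks u 1).length := by rwa [catBlocks_one, hu 0]
  have hfirst : v 0 = answer (α n) :=
    calc v 0 = answer ((catBlocks u 1).getD n d) := hv 0
      _ = answer (α n) := by rw [hα.catBlocks_eq_pre, getD_pre α hlen]
  change R (α n) (v 0)
  rw [hfirst]
  exact h_answer (α n)

theorem winsI_of_le [Nonempty O] (hR : ∀ b, ∃ a, ¬ R a b) (hf : IsDelay f) (hn : f 0 ≤ n) :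
    WinsI f {γ : ℕ → I × O | R (γ n).1 (γ 0).2} := by
  choose spoil h_spoil using hR
  obtain ⟨d⟩ := ‹Nonempty O›
  refine ⟨fun w => List.replicate (f w.length) (spoil (w.getD 0 d)),
    fun w => List.length_replicate, fun u v α hu hα => ?_⟩
  have hlen (i : ℕ) : (u i).length = f i := by simp [hu i]
  have hblock (i : ℕ) (hi : 1 ≤ i) : u i = List.replicate (f i) (spoil (v 0)) := by
    rw [hu i]
    change List.replicate (f (pre v i).length) (spoil ((pre v i).getD 0 d)) = _
    rw [length_pre, getD_pre v hi]
  have hne (i : ℕ) : u i ≠ [] := List.length_pos_iff.1 ((hf i).trans_eq (hlen i).symm)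
  obtain ⟨i, hi, hmem⟩ : ∃ i, 1 ≤ i ∧ α n ∈ u i :=
    hα.exists_mem_block hne (by rwa [catBlocks_one, hlen])
  rw [hblock i hi] at hmem
  change ¬ R (α n) (v 0)
  rw [List.eq_of_mem_replicate hmem]
  exact h_spoil (v 0)

end Games

theorem extOmega_lclop (n : ℕ) : extOmega (Lclop n) = {γ | (γ n).1 = (γ 0).2} := by
  ext γ
  rw [mem_extOmega_iff_of_length fun w hw => hw.1]
  change (pre γ (n + 1)).length = n + 1 ∧ _ = _ ↔ (γ n).1 = (γ 0).2
  rw [length_pre, getD_pre γ n.succ_pos, getD_pre γ n.lt_succ_self, eq_comm (a := (γ n).1),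
    and_iff_right rfl]

/-- the languages `L_n` are recognized by deterministic acyclic
finite automata of size `O(n)` and depth `n + 1`; Player O wins
`Γ_f(L_n·(Σ_I × Σ_O)^ω)` for some constant delay function, but Player I wins
`Γ_f(L_n·(Σ_I × Σ_O)^ω)` for every delay function `f` with `f(0) ≤ n`. -/
theorem stmt17 :
    ∃ c : ℕ, ∀ n : ℕ,
      (∃ (Q : Type) (_ : Fintype Q) (M : NA Q (Fin 2 × Fin 2)),
          M.Deterministic ∧ M.Acyclic ∧ Fintype.card Q ≤ c * n + c ∧
          M.HasDepth (n + 1) ∧ M.Lstar = Lclop n) ∧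
      (∃ f, IsDelay f ∧ IsConstant f ∧ WinsO f (extOmega (Lclop n))) ∧
      (∀ f, IsDelay f → f 0 ≤ n → WinsI f (extOmega (Lclop n))) := by
  refine ⟨51, fun n => ⟨⟨_, inferInstance, NA.ofDFA (clopDFA n), NA.deterministic_ofDFA _,
    (acyclic_exactLengthDFA _ _).ofDFA_inter _, ?_, hasDepth_clopDFA n, lstar_clopDFA n⟩, ?_, ?_⟩⟩
  · simp only [Fintype.card_prod, Fintype.card_fin, Fintype.card_option]
    omega
  · refine ⟨constantDelay (n + 1), isDelay_constantDelay n.succ_pos,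
      isConstant_constantDelay _, ?_⟩
    rw [extOmega_lclop]
    exact winsO_of_lt (fun a => ⟨a, rfl⟩) n.lt_succ_self
  · intro f hf hn
    rw [extOmega_lclop]
    exact winsI_of_le exists_ne hf hn

end DelayGames
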